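/- Let Y ⊂ P² be a set of C(d−1,2) − 1 points (d ≥ 5) that contains d subsets of d−3 collinear points arranged as the external vertices of a d-gon. Then the ideal I_Y ⊂ k[x,y,z] contains exactly one form of degree d−3 up to scalar, and contains no form of degree d−4. -/

import Mathlib

open Matrix MvPolynomial

noncomputable def det3 (a b c : Fin 3 → ℝ) : ℝ := (Matrix.of ![a, b, c]).det

theorem eval_smul_of_isHomogeneous {σ : Type*} {F : MvPolynomial σ ℝ} {e : ℕ}
    (hF : F.IsHomogeneous e) (c : ℝ) (x : σ → ℝ) : eval (c • x) F = c ^ e * eval x F := by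
  rw [eval_eq, eval_eq, Finset.mul_sum]
  refine Finset.sum_congr rfl fun m hm => ?_
  have hdeg : ∑ i ∈ m.support, m i = e := by
    have := hF (mem_support_iff.1 hm)
    simpa only [Finsupp.weight_apply, Finsupp.sum, Pi.one_apply, smul_eq_mul, mul_one] using this
  simp only [Pi.smul_apply, smul_eq_mul, mul_pow, Finset.prod_mul_distrib,
    Finset.prod_pow_eq_pow_sum, hdeg]
  ring

/-- The restriction of `F` to the parametrized line `t ↦ p + t • w`. -/
noncomputable def pencil {σ : Type*} (F : MvPolynomial σ ℝ) (p w : σ → ℝ) : Polynomial ℝ :=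
  aeval (fun i => Polynomial.C (p i) + Polynomial.C (w i) * Polynomial.X) F

theorem eval_pencil {σ : Type*} (F : MvPolynomial σ ℝ) (p w : σ → ℝ) (t : ℝ) :
    (pencil F p w).eval t = eval (p + t • w) F := by
  unfold pencil
  induction F using MvPolynomial.induction_on with
  | C a => simp
  | add F G hF hG => simp only [map_add, Polynomial.eval_add, hF, hG]
  | mul_X F i hF =>
    simp only [map_mul, Polynomial.eval_mul, hF, aeval_X, eval_X, Polynomial.eval_add,
      Polynomial.eval_C, Polynomial.eval_X, Pi.add_apply, Pi.smul_apply, smul_eq_mul]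
    ring

theorem natDegree_pencil_le {σ : Type*} {F : MvPolynomial σ ℝ} {e : ℕ}
    (hF : F.IsHomogeneous e) (p w : σ → ℝ) : (pencil F p w).natDegree ≤ e := by
  have h := aeval_natDegree_le (n := 1) F hF.totalDegree_le
    (fun i => Polynomial.C (p i) + Polynomial.C (w i) * Polynomial.X) fun i => by
      rw [add_comm]; exact Polynomial.natDegree_linear_le
  rwa [mul_one] at h

theorem eval_eq_zero_of_pencil {σ : Type*} {F : MvPolynomial σ ℝ} {e : ℕ}
    (hF : F.IsHomogeneous e) (p w : σ → ℝ) (S : Finset ℝ) (hS : e < S.card)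
    (h : ∀ t ∈ S, eval (p + t • w) F = 0) : eval w F = 0 := by
  have hf : pencil F p w = 0 :=
    Polynomial.eq_zero_of_natDegree_lt_card_of_eval_eq_zero' _ S
      (fun t ht => (eval_pencil F p w t).trans (h t ht))
      ((natDegree_pencil_le hF p w).trans_lt hS)
  have hg : pencil F w p = 0 := by
    refine Polynomial.eq_zero_of_infinite_isRoot _
      ((Set.finite_singleton (0 : ℝ)).infinite_compl.mono fun s hs => ?_)
    have hs : s ≠ 0 := hs
    have hsp : w + s • p = s • (p + s⁻¹ • w) := by
      rw [smul_add, smul_smul, mul_inv_cancel₀ hs, one_smul, add_comm]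
    rw [Set.mem_ofPred_eq, Polynomial.IsRoot, eval_pencil, hsp, eval_smul_of_isHomogeneous hF,
      ← eval_pencil, hf, Polynomial.eval_zero, mul_zero]
  have := eval_pencil F w p 0
  rwa [hg, Polynomial.eval_zero, zero_smul, add_zero, eq_comm] at this

theorem eval_eq_zero_of_eval_smul {σ : Type*} {F : MvPolynomial σ ℝ} {e : ℕ}
    (hF : F.IsHomogeneous e) {c : ℝ} (hc : c ≠ 0) {x : σ → ℝ} (h : eval (c • x) F = 0) :
    eval x F = 0 := by
  rw [eval_smul_of_isHomogeneous hF] at h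
  exact (mul_eq_zero.1 h).resolve_left (pow_ne_zero _ hc)

theorem eval_mk_rep_eq_zero_iff {σ : Type*} {F : MvPolynomial σ ℝ} {e : ℕ}
    (hF : F.IsHomogeneous e) {x : σ → ℝ} (hx : x ≠ 0) :
    eval (Projectivization.mk ℝ x hx).rep F = 0 ↔ eval x F = 0 := by
  obtain ⟨a, ha⟩ := Projectivization.exists_smul_eq_mk_rep ℝ x hx
  rw [← ha, Units.smul_def]
  refine ⟨eval_eq_zero_of_eval_smul hF a.ne_zero, fun h => ?_⟩
  rw [eval_smul_of_isHomogeneous hF, h, mul_zero]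

theorem dotProduct_mk_rep_eq_zero_iff {σ : Type*} [Fintype σ] (n : σ → ℝ) {x : σ → ℝ}
    (hx : x ≠ 0) : n ⬝ᵥ (Projectivization.mk ℝ x hx).rep = 0 ↔ n ⬝ᵥ x = 0 := by
  obtain ⟨a, ha⟩ := Projectivization.exists_smul_eq_mk_rep ℝ x hx
  rw [← ha, Units.smul_def, dotProduct_smul, smul_eq_mul, mul_eq_zero,
    or_iff_right a.ne_zero]

theorem exists_eq_smul_add_smul {n p w r : Fin 3 → ℝ} (hn : n ≠ 0) (hp : p ≠ 0)
    (hpw : ∀ c : ℝ, w ≠ c • p) (hnp : n ⬝ᵥ p = 0) (hnw : n ⬝ᵥ w = 0) (hnr : n ⬝ᵥ r = 0) :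
    ∃ a b : ℝ, r = a • p + b • w := by
  have hdet : (Matrix.of ![p, w, r]).det = 0 := by
    refine Matrix.exists_mulVec_eq_zero_iff.1 ⟨n, hn, funext fun i => ?_⟩
    rw [Matrix.mulVec, dotProduct_comm]
    fin_cases i <;> assumption
  obtain ⟨g, hg0, hg⟩ := Matrix.exists_vecMul_eq_zero_iff.2 hdet
  have hg' : g 0 • p + g 1 • w + g 2 • r = 0 := by
    ext i
    have := congrFun hg i
    simpa [Matrix.vecMul, dotProduct, Fin.sum_univ_three] using this
  by_cases h2 : g 2 = 0
  · exfalso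
    rw [h2, zero_smul, add_zero] at hg'
    by_cases h1 : g 1 = 0
    · rw [h1, zero_smul, add_zero] at hg'
      have h0 := (smul_eq_zero.1 hg').resolve_right hp
      exact hg0 (by ext i; fin_cases i <;> assumption)
    · apply hpw (-(g 1)⁻¹ * g 0)
      have : g 1 • w = -(g 0 • p) := by rw [eq_neg_iff_add_eq_zero, add_comm, hg']
      rw [mul_smul, neg_smul, ← smul_neg, ← this, smul_smul, inv_mul_cancel₀ h1, one_smul]
  · refine ⟨-(g 2)⁻¹ * g 0, -(g 2)⁻¹ * g 1, ?_⟩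
    have : g 2 • r = -(g 0 • p + g 1 • w) := by rw [eq_neg_iff_add_eq_zero, add_comm, hg']
    rw [mul_smul, mul_smul, ← smul_add, neg_smul, ← smul_neg, ← this, smul_smul,
      inv_mul_cancel₀ h2, one_smul]

/-- A form of degree `e` with more than `e` zeros on a line vanishes on that line. -/
theorem eval_eq_zero_on_line {F : MvPolynomial (Fin 3) ℝ} {e : ℕ} (hF : F.IsHomogeneous e)
    {n : Fin 3 → ℝ} (hn : n ≠ 0) (S : Finset (Projectivization ℝ (Fin 3 → ℝ)))
    (hS : e < S.card) (hline : ∀ q ∈ S, n ⬝ᵥ q.rep = 0) (h0 : ∀ q ∈ S, eval q.rep F = 0)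
    {w : Fin 3 → ℝ} (hw : n ⬝ᵥ w = 0) : eval w F = 0 := by
  classical
  by_contra hFw
  obtain ⟨q₀, hq₀⟩ := Finset.card_pos.1 (pos_of_gt hS)
  have key : ∀ q ∈ S, ∃ t c : ℝ, c ≠ 0 ∧ q.rep = c • (q₀.rep + t • w) := by
    intro q hq
    obtain ⟨a, b, hab⟩ := exists_eq_smul_add_smul hn q₀.rep_nonzero
      (fun c hc => hFw (by rw [hc, eval_smul_of_isHomogeneous hF, h0 _ hq₀, mul_zero]))
      (hline _ hq₀) hw (hline _ hq)
    have ha : a ≠ 0 := by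
      rintro rfl
      rw [zero_smul, zero_add] at hab
      have hb : b ≠ 0 := by
        rintro rfl
        exact q.rep_nonzero (by rw [hab, zero_smul])
      exact hFw (eval_eq_zero_of_eval_smul hF hb (hab ▸ h0 q hq))
    refine ⟨a⁻¹ * b, a, ha, ?_⟩
    rw [smul_add, smul_smul, mul_inv_cancel_left₀ ha, hab]
  choose! t c hc hq using key
  refine hFw (eval_eq_zero_of_pencil hF q₀.rep w (S.image t) ?_ ?_)
  · rwa [Finset.card_image_of_injOn]
    intro q hqS r hrS hqr
    rw [← q.mk_rep, ← r.mk_rep, Projectivization.mk_eq_mk_iff']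
    refine ⟨c q * (c r)⁻¹, ?_⟩
    rw [hq q hqS, hq r hrS, smul_smul, inv_mul_cancel_right₀ (hc r hrS), hqr]
  · simp only [Finset.mem_image]
    rintro _ ⟨q, hqS, rfl⟩
    exact eval_eq_zero_of_eval_smul hF (hc q hqS) (hq q hqS ▸ h0 q hqS)

theorem exists_eval_ne_zero_and_dotProduct_ne_zero {σ ι : Type*} [Fintype σ]
    {F : MvPolynomial σ ℝ} (hF : F ≠ 0) (s : Finset ι) (m : ι → σ → ℝ)
    (hm : ∀ k ∈ s, m k ≠ 0) : ∃ w, eval w F ≠ 0 ∧ ∀ k ∈ s, m k ⬝ᵥ w ≠ 0 := by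
  have heval : ∀ k w, eval w (∑ i, C (m k i) * X i : MvPolynomial σ ℝ) = m k ⬝ᵥ w := by
    intro k w
    simp [dotProduct]
  have hprod : F * ∏ k ∈ s, (∑ i, C (m k i) * X i : MvPolynomial σ ℝ) ≠ 0 := by
    refine mul_ne_zero hF (Finset.prod_ne_zero_iff.2 fun k hk h => hm k hk ?_)
    rw [← dotProduct_self_eq_zero, ← heval, h, map_zero]
  obtain ⟨w, hw⟩ : ∃ w, eval w (F * ∏ k ∈ s, (∑ i, C (m k i) * X i : MvPolynomial σ ℝ)) ≠ 0 := by
    by_contra! h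
    exact hprod (MvPolynomial.funext fun w => by rw [h w, map_zero])
  rw [map_mul, map_prod] at hw
  exact ⟨w, left_ne_zero_of_mul hw, fun k hk =>
    heval k w ▸ Finset.prod_ne_zero_iff.1 (right_ne_zero_of_mul hw) k hk⟩

/-- A form of degree `e` that vanishes on more than `e` distinct hyperplanes is zero. -/
theorem eq_zero_of_eval_eq_zero_on_hyperplanes {σ ι : Type*} [Fintype σ] [Fintype ι]
    {F : MvPolynomial σ ℝ} {e : ℕ} (hF : F.IsHomogeneous e) (n : ι → σ → ℝ)
    (hn : ∀ i, n i ≠ 0) (hind : ∀ i j, i ≠ j → ∀ c : ℝ, n j ≠ c • n i)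
    (he : e < Fintype.card ι) (h : ∀ i w, n i ⬝ᵥ w = 0 → eval w F = 0) : F = 0 := by
  classical
  by_contra hF0
  obtain ⟨w, hFw, hw⟩ := exists_eval_ne_zero_and_dotProduct_ne_zero hF0 Finset.univ n
    fun i _ => hn i
  obtain ⟨p, -, hp⟩ := exists_eval_ne_zero_and_dotProduct_ne_zero hF0
    (Finset.univ.filter fun k : ι × ι => k.1 ≠ k.2)
    (fun k => (n k.1 ⬝ᵥ w) • n k.2 - (n k.2 ⬝ᵥ w) • n k.1) (by
      rintro ⟨i, j⟩ hij h0
      refine hind i j (by simpa using hij) ((n i ⬝ᵥ w)⁻¹ * (n j ⬝ᵥ w)) ?_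
      rw [mul_smul, ← sub_eq_zero.1 h0, smul_smul, inv_mul_cancel₀ (hw i (Finset.mem_univ i)),
        one_smul])
  refine hFw (eval_eq_zero_of_pencil hF p w
    (Finset.univ.image fun i => -(n i ⬝ᵥ p) / (n i ⬝ᵥ w)) ?_ ?_)
  · rwa [Finset.card_image_of_injective, Finset.card_univ]
    intro i j hij
    by_contra hne
    refine hp (i, j) (by simpa using hne) ?_
    have hij : -(n i ⬝ᵥ p) / (n i ⬝ᵥ w) = -(n j ⬝ᵥ p) / (n j ⬝ᵥ w) := hij
    rw [div_eq_div_iff (hw i (Finset.mem_univ i)) (hw j (Finset.mem_univ j))] at hij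
    simp only [sub_dotProduct, smul_dotProduct, smul_eq_mul]
    linarith
  · simp only [Finset.mem_image]
    rintro _ ⟨i, -, rfl⟩
    refine h i _ ?_
    rw [dotProduct_add, dotProduct_smul, smul_eq_mul,
      div_mul_cancel₀ _ (hw i (Finset.mem_univ i)), add_neg_cancel]

/-- Fewer points than there are monomials of degree `e` do not impose enough conditions to
exclude forms of degree `e`. -/
theorem exists_isHomogeneous_eval_eq_zero (e : ℕ) (S : Finset (Projectivization ℝ (Fin 3 → ℝ)))
    (hS : S.card < (e + 2).choose 2) :
    ∃ F : MvPolynomial (Fin 3) ℝ, F ≠ 0 ∧ F.IsHomogeneous e ∧ ∀ q ∈ S, eval q.rep F = 0 := by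
  let Φ : (Sym (Fin 3) e → ℝ) →ₗ[ℝ] MvPolynomial (Fin 3) ℝ :=
    Fintype.linearCombination ℝ fun s => monomial (Multiset.toFinsupp (s : Multiset (Fin 3))) 1
  let Ψ : (Sym (Fin 3) e → ℝ) →ₗ[ℝ] (S → ℝ) :=
    LinearMap.pi fun q => (aeval (R := ℝ) q.1.rep).toLinearMap ∘ₗ Φ
  have hker : Ψ.ker ≠ ⊥ := by
    refine LinearMap.ker_ne_bot_of_finrank_lt ?_
    rw [Module.finrank_fintype_fun_eq_card, Module.finrank_fintype_fun_eq_card,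
      Sym.card_sym_eq_choose, Fintype.card_coe, Fintype.card_fin,
      show 3 + e - 1 = e + 2 by omega, Nat.choose_symm_add]
    exact hS
  obtain ⟨c, hc, hc0⟩ := Submodule.exists_mem_ne_zero_of_ne_bot hker
  have hΦ : ∀ c, Φ c = ∑ s : Sym (Fin 3) e, monomial (Multiset.toFinsupp (s : Multiset (Fin 3))) (c s) := by
    intro c
    simp [Φ, Fintype.linearCombination_apply, smul_monomial]
  refine ⟨Φ c, fun h => hc0 (funext fun s => ?_), ?_, fun q hq => ?_⟩
  · have := congrArg (coeff (Multiset.toFinsupp (s : Multiset (Fin 3)))) h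
    rw [hΦ, coeff_sum, Finset.sum_eq_single s] at this
    · simpa using this
    · intro t _ hts
      rw [coeff_monomial, if_neg]
      exact fun h => hts (Sym.coe_injective (Multiset.toFinsupp.injective h))
    · exact fun h => absurd (Finset.mem_univ s) h
  · rw [hΦ]
    refine IsHomogeneous.sum _ _ _ fun s _ => isHomogeneous_monomial _ ?_
    have := Multiset.toFinsupp_sum_eq (s : Multiset (Fin 3))
    rwa [Sym.card_coe] at this
  · have := congrFun (LinearMap.mem_ker.1 hc) ⟨q, hq⟩
    simpa [Ψ, aeval_eq_eval] using this

theorem infinite_setOf_dotProduct_rep_eq_zero {n : Fin 3 → ℝ} (hn : n ≠ 0) :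
    {q : Projectivization ℝ (Fin 3 → ℝ) | n ⬝ᵥ q.rep = 0}.Infinite := by
  obtain ⟨a, ha0, hna⟩ : ∃ a : Fin 3 → ℝ, a ≠ 0 ∧ n ⬝ᵥ a = 0 := by
    by_contra! h
    have hcross : ∀ u, crossProduct n u = 0 := fun u => by
      by_contra hu
      exact h _ hu (dot_self_cross n u)
    have h1 := hcross ![1, 0, 0]
    have h2 := hcross ![0, 1, 0]
    rw [cross_apply] at h1 h2
    refine hn (funext fun i => ?_)
    fin_cases i
    · simpa using congrFun h2 2
    · simpa using congrFun h1 2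
    · simpa using congrFun h1 1
  have hnn : n ⬝ᵥ n ≠ 0 := fun h => hn (dotProduct_self_eq_zero.1 h)
  have haa : a ⬝ᵥ a ≠ 0 := fun h => ha0 (dotProduct_self_eq_zero.1 h)
  set b := crossProduct n a with hb
  have hab : a ⬝ᵥ b = 0 := dot_cross_self n a
  have hnb : n ⬝ᵥ b = 0 := dot_self_cross n a
  have hb0 : b ≠ 0 := by
    intro h
    have := cross_dot_cross n a n a
    rw [← hb, h, zero_dotProduct, hna, zero_mul, sub_zero] at this
    exact mul_ne_zero hnn haa this.symm
  have hne : ∀ t : ℝ, a + t • b ≠ 0 := fun t h => by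
    apply haa
    have := congrArg (fun u => a ⬝ᵥ u) h
    simpa [dotProduct_add, dotProduct_smul, hab] using this
  refine (Set.infinite_range_of_injective
    (f := fun t : ℝ => Projectivization.mk ℝ (a + t • b) (hne t)) fun t s hts => ?_).mono ?_
  · obtain ⟨c, hc⟩ := (Projectivization.mk_eq_mk_iff' ℝ _ _ _ _).1 hts
    have hc1 : c = 1 := by
      have := congrArg (fun u => a ⬝ᵥ u) hc
      simpa [dotProduct_add, dotProduct_smul, hab, haa] using this
    rw [hc1, one_smul] at hc
    exact (smul_left_injective ℝ hb0 (add_left_cancel hc)).symm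
  · rintro _ ⟨t, rfl⟩
    change _ = _
    rw [dotProduct_mk_rep_eq_zero_iff, dotProduct_add, dotProduct_smul, hna, hnb, smul_zero,
      add_zero]

theorem exists_forall_dotProduct_rep_eq_zero_iff {a b : Fin 3 → ℝ}
    (hab : LinearIndependent ℝ ![a, b]) :
    ∃ q : Projectivization ℝ (Fin 3 → ℝ),
      ∀ r, (a ⬝ᵥ r.rep = 0 ∧ b ⬝ᵥ r.rep = 0) ↔ r = q := by
  have h0 := crossProduct_ne_zero_iff_linearIndependent.2 hab
  refine ⟨Projectivization.mk ℝ _ h0, fun r => ⟨fun ⟨ha, hb⟩ => ?_, ?_⟩⟩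
  · have hcross : crossProduct (crossProduct a b) r.rep = 0 := by
      rw [cross_cross_eq_smul_sub_smul, ha, hb, zero_smul, zero_smul, sub_zero]
    by_contra hr
    refine crossProduct_ne_zero_iff_linearIndependent.2
      ((LinearIndependent.pair_iff' h0).2 fun c hc => hr ?_) hcross
    rw [← r.mk_rep, Projectivization.mk_eq_mk_iff']
    exact ⟨c, hc⟩
  · rintro rfl
    rw [dotProduct_mk_rep_eq_zero_iff, dotProduct_mk_rep_eq_zero_iff]
    exact ⟨dot_self_cross a b, dot_cross_self a b⟩

/-- Two distinct indices of a cyclic sequence that are not consecutive. -/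
def IsDiagonal {d : ℕ} [NeZero d] (i j : Fin d) : Prop :=
  i ≠ j ∧ j ≠ i + 1 ∧ i ≠ j + 1

instance {d : ℕ} [NeZero d] (i j : Fin d) : Decidable (IsDiagonal i j) :=
  inferInstanceAs (Decidable (_ ∧ _ ∧ _))

theorem IsDiagonal.symm {d : ℕ} [NeZero d] {i j : Fin d} (h : IsDiagonal i j) :
    IsDiagonal j i :=
  ⟨h.1.symm, h.2.2, h.2.1⟩

section Polygon

open scoped Fin.CommRing

theorem add_natCast_ne_self {d : ℕ} [NeZero d] (i : Fin d) {k : ℕ} (h0 : 0 < k) (hk : k < d) :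
    i + (k : Fin d) ≠ i := by
  rw [Ne, add_eq_left, Fin.natCast_eq_zero]
  exact Nat.not_dvd_of_pos_of_lt h0 hk

theorem card_isDiagonal {d : ℕ} [NeZero d] (hd : 5 ≤ d) (i : Fin d) :
    (Finset.univ.filter (IsDiagonal i)).card = d - 3 := by
  have h1 := add_natCast_ne_self i (k := 1) (by omega) (by omega)
  have h2 := add_natCast_ne_self (i - 1) (k := 2) (by omega) (by omega)
  have h3 := add_natCast_ne_self (i - 1) (k := 1) (by omega) (by omega)
  rw [show i - 1 + ((2 : ℕ) : Fin d) = i + 1 by push_cast; ring] at h2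
  simp only [Nat.cast_one, sub_add_cancel] at h1 h3
  have hcompl : Finset.univ.filter (IsDiagonal i) = ({i, i + 1, i - 1} : Finset (Fin d))ᶜ := by
    ext j
    simp only [IsDiagonal, Finset.mem_filter, Finset.mem_univ, true_and, Finset.mem_compl,
      Finset.mem_insert, Finset.mem_singleton, not_or, eq_sub_iff_add_eq, ne_eq, eq_comm]
  rw [hcompl, Finset.card_compl, Fintype.card_fin,
    Finset.card_eq_three.2 ⟨i, i + 1, i - 1, h1.symm, h3, h2, rfl⟩]

theorem card_isDiagonal_pairs {d : ℕ} [NeZero d] (hd : 5 ≤ d) :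
    (Finset.univ.filter fun p : Fin d × Fin d => IsDiagonal p.1 p.2 ∧ p.1 < p.2).card =
      (d - 1).choose 2 - 1 := by
  have hall : (Finset.univ.filter fun p : Fin d × Fin d => IsDiagonal p.1 p.2).card =
      d * (d - 3) := by
    rw [Finset.card_filter, Fintype.sum_prod_type]
    simp only [← Finset.card_filter, card_isDiagonal hd, Finset.sum_const, Finset.card_univ,
      Fintype.card_fin, smul_eq_mul]
  have hswap : (Finset.univ.filter fun p : Fin d × Fin d => IsDiagonal p.1 p.2 ∧ p.1 < p.2).card =
      (Finset.univ.filter fun p : Fin d × Fin d => IsDiagonal p.1 p.2 ∧ ¬ p.1 < p.2).card := by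
    refine Finset.card_bij (fun p _ => p.swap) ?_ (fun p _ q _ h => Prod.swap_injective h) ?_
    · rintro ⟨i, j⟩ h
      simp only [Finset.mem_filter, Finset.mem_univ, true_and, Prod.swap] at h ⊢
      exact ⟨h.1.symm, h.2.le.not_gt⟩
    · rintro ⟨i, j⟩ h
      simp only [Finset.mem_filter, Finset.mem_univ, true_and] at h
      refine ⟨(j, i), ?_, rfl⟩
      simp only [Finset.mem_filter, Finset.mem_univ, true_and]
      exact ⟨h.1.symm, lt_of_le_of_ne (not_lt.1 h.2) h.1.1.symm⟩
  have hsum := Finset.card_filter_add_card_filter_not (p := fun p : Fin d × Fin d => p.1 < p.2)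
    (s := Finset.univ.filter fun p : Fin d × Fin d => IsDiagonal p.1 p.2)
  rw [Finset.filter_filter, Finset.filter_filter, hall, ← hswap] at hsum
  obtain ⟨m, rfl⟩ := Nat.exists_eq_add_of_le hd
  have hchoose : (5 + m - 1).choose 2 * 2 = (4 + m) * (3 + m) := by
    rw [Nat.choose_two_right, Nat.div_mul_cancel (Nat.even_mul_pred_self _).two_dvd,
      show 5 + m - 1 = 4 + m by omega, show 4 + m - 1 = 3 + m by omega]
  rw [show 5 + m - 3 = 2 + m by omega] at hsum
  have : (4 + m) * (3 + m) = (5 + m) * (2 + m) + 2 := by ring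
  omega

variable {d : ℕ} [NeZero d] {n : Fin d → Fin 3 → ℝ} {Y : Set (Projectivization ℝ (Fin 3 → ℝ))}

theorem linearIndependent_of_isDiagonal (hd : 5 ≤ d) (hne : ∀ i, n i ≠ 0)
    (hYdef : Y = {q | ∃ i j : Fin d, IsDiagonal i j ∧ n i ⬝ᵥ q.rep = 0 ∧ n j ⬝ᵥ q.rep = 0})
    (hline : ∀ i : Fin d, {q ∈ Y | n i ⬝ᵥ q.rep = 0}.ncard = d - 3)
    {i j : Fin d} (hij : IsDiagonal i j) : LinearIndependent ℝ ![n i, n j] := by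
  refine (LinearIndependent.pair_iff' (hne i)).2 fun c hc => ?_
  have hfin : {q ∈ Y | n i ⬝ᵥ q.rep = 0}.Finite :=
    Set.finite_of_ncard_ne_zero (by rw [hline]; omega)
  refine infinite_setOf_dotProduct_rep_eq_zero (hne i) (hfin.subset fun q hq => ⟨?_, hq⟩)
  have hq : n i ⬝ᵥ q.rep = 0 := hq
  rw [hYdef]
  exact ⟨i, j, hij, hq, by rw [← hc, smul_dotProduct, hq, smul_zero]⟩

/-- Each external vertex determines the two edge-lines it lies on. -/
theorem eq_or_eq_of_isDiagonal (hd : 5 ≤ d) (hne : ∀ i, n i ≠ 0)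
    (hYdef : Y = {q | ∃ i j : Fin d, IsDiagonal i j ∧ n i ⬝ᵥ q.rep = 0 ∧ n j ⬝ᵥ q.rep = 0})
    (hYcard : Y.ncard = Nat.choose (d - 1) 2 - 1)
    (hline : ∀ i : Fin d, {q ∈ Y | n i ⬝ᵥ q.rep = 0}.ncard = d - 3)
    {i j k l : Fin d} (hij : IsDiagonal i j) (hkl : IsDiagonal k l)
    {q : Projectivization ℝ (Fin 3 → ℝ)} (hi : n i ⬝ᵥ q.rep = 0) (hj : n j ⬝ᵥ q.rep = 0)
    (hk : n k ⬝ᵥ q.rep = 0) (hl : n l ⬝ᵥ q.rep = 0) : i = k ∧ j = l ∨ i = l ∧ j = k := by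
  classical
  have hP : ∀ p : Fin d × Fin d, ∃ q : Projectivization ℝ (Fin 3 → ℝ), IsDiagonal p.1 p.2 →
      ∀ r, (n p.1 ⬝ᵥ r.rep = 0 ∧ n p.2 ⬝ᵥ r.rep = 0) ↔ r = q := by
    intro p
    by_cases hp : IsDiagonal p.1 p.2
    · obtain ⟨q, hq⟩ := exists_forall_dotProduct_rep_eq_zero_iff
        (linearIndependent_of_isDiagonal hd hne hYdef hline hp)
      exact ⟨q, fun _ => hq⟩
    · exact ⟨q, fun h => absurd h hp⟩
  choose P hP using hP
  set S := Finset.univ.filter fun p : Fin d × Fin d => IsDiagonal p.1 p.2 ∧ p.1 < p.2 with hS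
  have himage : (S.image P : Set (Projectivization ℝ (Fin 3 → ℝ))) = Y := by
    ext r
    rw [hYdef]
    simp only [hS, Finset.coe_image, Set.mem_image, Finset.mem_coe, Finset.mem_filter,
      Finset.mem_univ, true_and]
    constructor
    · rintro ⟨p, ⟨hp, -⟩, rfl⟩
      exact ⟨p.1, p.2, hp, (hP p hp _).2 rfl⟩
    · rintro ⟨i, j, hij, hi, hj⟩
      rcases lt_or_gt_of_ne hij.1 with h | h
      · exact ⟨(i, j), ⟨hij, h⟩, ((hP (i, j) hij r).1 ⟨hi, hj⟩).symm⟩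
      · exact ⟨(j, i), ⟨hij.symm, h⟩, ((hP (j, i) hij.symm r).1 ⟨hj, hi⟩).symm⟩
  have hinj : Set.InjOn P S := by
    refine Finset.injOn_of_card_image_eq ?_
    rw [← Set.ncard_coe_finset, himage, hYcard, hS, card_isDiagonal_pairs hd]
  have hsort : ∀ {i j k l : Fin d}, i < j → k < l → IsDiagonal i j → IsDiagonal k l →
      n i ⬝ᵥ q.rep = 0 → n j ⬝ᵥ q.rep = 0 → n k ⬝ᵥ q.rep = 0 → n l ⬝ᵥ q.rep = 0 →
      i = k ∧ j = l := by
    intro i j k l hlt hlt' hij hkl hi hj hk hl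
    have h : P (i, j) = P (k, l) :=
      ((hP (i, j) hij q).1 ⟨hi, hj⟩).symm.trans ((hP (k, l) hkl q).1 ⟨hk, hl⟩)
    exact Prod.ext_iff.1 (hinj (by simp [hS, hij, hlt]) (by simp [hS, hkl, hlt']) h)
  rcases lt_or_gt_of_ne hij.1 with h | h <;> rcases lt_or_gt_of_ne hkl.1 with h' | h'
  · exact Or.inl (hsort h h' hij hkl hi hj hk hl)
  · exact Or.inr (hsort h h' hij hkl.symm hi hj hl hk)
  · exact Or.inr (hsort h h' hij.symm hkl hj hi hk hl).symm
  · exact Or.inl (hsort h h' hij.symm hkl.symm hj hi hl hk).symm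

theorem exists_isDiagonal_of_mem (hd : 5 ≤ d) (hne : ∀ i, n i ≠ 0)
    (hYdef : Y = {q | ∃ i j : Fin d, IsDiagonal i j ∧ n i ⬝ᵥ q.rep = 0 ∧ n j ⬝ᵥ q.rep = 0})
    (hYcard : Y.ncard = Nat.choose (d - 1) 2 - 1)
    (hline : ∀ i : Fin d, {q ∈ Y | n i ⬝ᵥ q.rep = 0}.ncard = d - 3)
    {i : Fin d} {q : Projectivization ℝ (Fin 3 → ℝ)} (hq : q ∈ Y) (hi : n i ⬝ᵥ q.rep = 0) :
    ∃ j, IsDiagonal i j ∧ n j ⬝ᵥ q.rep = 0 := by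
  classical
  have hP : ∀ j, ∃ r : Projectivization ℝ (Fin 3 → ℝ), IsDiagonal i j →
      n i ⬝ᵥ r.rep = 0 ∧ n j ⬝ᵥ r.rep = 0 := by
    intro j
    by_cases hj : IsDiagonal i j
    · obtain ⟨r, hr⟩ := exists_forall_dotProduct_rep_eq_zero_iff
        (linearIndependent_of_isDiagonal hd hne hYdef hline hj)
      exact ⟨r, fun _ => (hr r).2 rfl⟩
    · exact ⟨q, fun h => absurd h hj⟩
  choose P hP using hP
  have hinj : Set.InjOn P (Finset.univ.filter (IsDiagonal i)) := by
    intro j hj k hk hjk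
    simp only [Finset.coe_filter, Finset.mem_univ, true_and] at hj hk
    have hj : IsDiagonal i j := hj
    have hk : IsDiagonal i k := hk
    rcases eq_or_eq_of_isDiagonal hd hne hYdef hYcard hline hj hk (hP j hj).1 (hP j hj).2
      (hP j hj).1 (hjk ▸ (hP k hk).2) with h | h
    · exact h.2
    · exact absurd h.1 hk.1
  have hfin : {q ∈ Y | n i ⬝ᵥ q.rep = 0}.Finite :=
    Set.finite_of_ncard_ne_zero (by rw [hline]; omega)
  have heq : (((Finset.univ.filter (IsDiagonal i)).image P : Finset _) :
      Set (Projectivization ℝ (Fin 3 → ℝ))) = {q ∈ Y | n i ⬝ᵥ q.rep = 0} := by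
    refine Set.eq_of_subset_of_ncard_le ?_ ?_ hfin
    · intro r hr
      simp only [Finset.coe_image, Set.mem_image, Finset.mem_coe, Finset.mem_filter,
        Finset.mem_univ, true_and] at hr
      obtain ⟨j, hj, rfl⟩ := hr
      refine ⟨?_, (hP j hj).1⟩
      rw [hYdef]
      exact ⟨i, j, hj, hP j hj⟩
    · rw [hline, Set.ncard_coe_finset, Finset.card_image_of_injOn hinj, card_isDiagonal hd]
  have hmem : q ∈ {q ∈ Y | n i ⬝ᵥ q.rep = 0} := ⟨hq, hi⟩
  rw [← heq] at hmem
  simp only [Finset.coe_image, Set.mem_image, Finset.mem_coe, Finset.mem_filter,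
    Finset.mem_univ, true_and] at hmem
  obtain ⟨j, hj, rfl⟩ := hmem
  exact ⟨j, hj, (hP j hj).2⟩

/-- No vertex of the polygon is an external vertex. -/
theorem notMem_of_consecutive (hd : 5 ≤ d) (hne : ∀ i, n i ≠ 0)
    (hYdef : Y = {q | ∃ i j : Fin d, IsDiagonal i j ∧ n i ⬝ᵥ q.rep = 0 ∧ n j ⬝ᵥ q.rep = 0})
    (hYcard : Y.ncard = Nat.choose (d - 1) 2 - 1)
    (hline : ∀ i : Fin d, {q ∈ Y | n i ⬝ᵥ q.rep = 0}.ncard = d - 3)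
    {i : Fin d} {q : Projectivization ℝ (Fin 3 → ℝ)} (hi : n i ⬝ᵥ q.rep = 0)
    (hi' : n (i + 1) ⬝ᵥ q.rep = 0) : q ∉ Y := by
  intro hq
  obtain ⟨j, hij, hj⟩ := exists_isDiagonal_of_mem hd hne hYdef hYcard hline hq hi
  obtain ⟨k, hik, hk⟩ := exists_isDiagonal_of_mem hd hne hYdef hYcard hline hq hi'
  rcases eq_or_eq_of_isDiagonal hd hne hYdef hYcard hline hij hik hi hj hi' hk with h | h
  · have := add_natCast_ne_self i (k := 1) (by omega) (by omega)
    rw [Nat.cast_one] at this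
    exact this h.1.symm
  · exact hij.2.1 h.2

theorem linearIndependent_of_consecutive (hd : 5 ≤ d) (hne : ∀ i, n i ≠ 0)
    (hYdef : Y = {q | ∃ i j : Fin d, IsDiagonal i j ∧ n i ⬝ᵥ q.rep = 0 ∧ n j ⬝ᵥ q.rep = 0})
    (hYcard : Y.ncard = Nat.choose (d - 1) 2 - 1)
    (hline : ∀ i : Fin d, {q ∈ Y | n i ⬝ᵥ q.rep = 0}.ncard = d - 3) (i : Fin d) :
    LinearIndependent ℝ ![n i, n (i + 1)] := by
  refine (LinearIndependent.pair_iff' (hne i)).2 fun c hc => ?_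
  obtain ⟨q, hqY, hq⟩ : {q ∈ Y | n i ⬝ᵥ q.rep = 0}.Nonempty :=
    Set.nonempty_of_ncard_ne_zero (by rw [hline]; omega)
  exact notMem_of_consecutive hd hne hYdef hYcard hline hq
    (by rw [← hc, smul_dotProduct, hq, smul_zero]) hqY

theorem ne_smul_of_ne (hd : 5 ≤ d) (hne : ∀ i, n i ≠ 0)
    (hYdef : Y = {q | ∃ i j : Fin d, IsDiagonal i j ∧ n i ⬝ᵥ q.rep = 0 ∧ n j ⬝ᵥ q.rep = 0})
    (hYcard : Y.ncard = Nat.choose (d - 1) 2 - 1)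
    (hline : ∀ i : Fin d, {q ∈ Y | n i ⬝ᵥ q.rep = 0}.ncard = d - 3)
    (i j : Fin d) (hij : i ≠ j) (c : ℝ) : n j ≠ c • n i := by
  have hcons := linearIndependent_of_consecutive hd hne hYdef hYcard hline
  have hind : LinearIndependent ℝ ![n i, n j] := by
    by_cases h1 : j = i + 1
    · exact h1 ▸ hcons i
    by_cases h2 : i = j + 1
    · exact LinearIndependent.pair_symm_iff.1 (h2 ▸ hcons j)
    exact linearIndependent_of_isDiagonal hd hne hYdef hline ⟨hij, h1, h2⟩
  exact ((LinearIndependent.pair_iff' (hne i)).1 hind c).symm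

/-- A form of degree `d - 3` through the external vertices that vanishes at one vertex of the
polygon is zero. -/
theorem eq_zero_of_eval_vertex_eq_zero (hd : 5 ≤ d) (hne : ∀ i, n i ≠ 0)
    (hYdef : Y = {q | ∃ i j : Fin d, IsDiagonal i j ∧ n i ⬝ᵥ q.rep = 0 ∧ n j ⬝ᵥ q.rep = 0})
    (hYcard : Y.ncard = Nat.choose (d - 1) 2 - 1)
    (hline : ∀ i : Fin d, {q ∈ Y | n i ⬝ᵥ q.rep = 0}.ncard = d - 3)
    {F : MvPolynomial (Fin 3) ℝ} (hF : F.IsHomogeneous (d - 3))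
    (hFY : ∀ q ∈ Y, eval q.rep F = 0)
    (h0 : eval (crossProduct (n 0) (n (0 + 1))) F = 0) : F = 0 := by
  classical
  have hcons := linearIndependent_of_consecutive hd hne hYdef hYcard hline
  have hstep : ∀ i, eval (crossProduct (n i) (n (i + 1))) F = 0 →
      ∀ w, n (i + 1) ⬝ᵥ w = 0 → eval w F = 0 := by
    intro i hi w hw
    have hp := crossProduct_ne_zero_iff_linearIndependent.2 (hcons i)
    have h1 : n (i + 1) ⬝ᵥ (Projectivization.mk ℝ _ hp).rep = 0 :=
      (dotProduct_mk_rep_eq_zero_iff _ _).2 (dot_cross_self _ _)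
    have hpY : Projectivization.mk ℝ _ hp ∉ Y := notMem_of_consecutive hd hne hYdef hYcard hline
      ((dotProduct_mk_rep_eq_zero_iff _ _).2 (dot_self_cross _ _)) h1
    have hfin : {q ∈ Y | n (i + 1) ⬝ᵥ q.rep = 0}.Finite :=
      Set.finite_of_ncard_ne_zero (by rw [hline]; omega)
    refine eval_eq_zero_on_line hF (hne (i + 1))
      (insert (Projectivization.mk ℝ _ hp) hfin.toFinset) ?_ ?_ ?_ hw
    · rw [Finset.card_insert_of_notMem fun h => hpY (hfin.mem_toFinset.1 h).1,
        ← Set.ncard_eq_toFinset_card _ hfin, hline]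
      exact Nat.lt_succ_self _
    · intro q hq
      rcases Finset.mem_insert.1 hq with rfl | hq
      · exact h1
      · exact (hfin.mem_toFinset.1 hq).2
    · intro q hq
      rcases Finset.mem_insert.1 hq with rfl | hq
      · exact (eval_mk_rep_eq_zero_iff hF hp).2 hi
      · exact hFY q (hfin.mem_toFinset.1 hq).1
  have hvertex : ∀ k : ℕ, eval (crossProduct (n (k : Fin d)) (n ((k : Fin d) + 1))) F = 0 := by
    intro k
    induction k with
    | zero => simpa using h0
    | succ k ih =>
      refine hstep k ih _ ?_
      rw [Nat.cast_succ]
      exact dot_self_cross _ _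
  refine eq_zero_of_eval_eq_zero_on_hyperplanes hF n hne
    (ne_smul_of_ne hd hne hYdef hYcard hline) (by rw [Fintype.card_fin]; omega) fun i w hw => ?_
  have hi : eval (crossProduct (n (i - 1)) (n (i - 1 + 1))) F = 0 := by
    simpa using hvertex (i - 1 : Fin d).val
  exact hstep (i - 1) hi w (by rwa [sub_add_cancel])

end Polygon

theorem stmt13 (d : ℕ) (hd : 5 ≤ d) [NeZero d] (v n : Fin d → Fin 3 → ℝ)
    (hn : ∀ m, n m = crossProduct (v m) (v (m + 1)))
    (hne : ∀ i, n i ≠ 0)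
    (Y : Set (Projectivization ℝ (Fin 3 → ℝ)))
    (hYdef : Y = {q | ∃ i j : Fin d, i ≠ j ∧ j ≠ i + 1 ∧ i ≠ j + 1 ∧
        n i ⬝ᵥ q.rep = 0 ∧ n j ⬝ᵥ q.rep = 0})
    (hYcard : Y.ncard = Nat.choose (d - 1) 2 - 1)
    (hline : ∀ i : Fin d, {q ∈ Y | n i ⬝ᵥ q.rep = 0}.ncard = d - 3)
    (hcoll : ∀ L : Fin 3 → ℝ, L ≠ 0 → {q ∈ Y | L ⬝ᵥ q.rep = 0}.ncard ≤ d - 3) :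
    (∃ F : MvPolynomial (Fin 3) ℝ, F ≠ 0 ∧ F.IsHomogeneous (d - 3) ∧
        ∀ q ∈ Y, eval q.rep F = 0) ∧
    (∀ F G : MvPolynomial (Fin 3) ℝ, F ≠ 0 → F.IsHomogeneous (d - 3) →
        (∀ q ∈ Y, eval q.rep F = 0) → G.IsHomogeneous (d - 3) →
        (∀ q ∈ Y, eval q.rep G = 0) → ∃ c : ℝ, G = c • F) ∧
    (∀ F : MvPolynomial (Fin 3) ℝ, F.IsHomogeneous (d - 4) →
        (∀ q ∈ Y, eval q.rep F = 0) → F = 0) := by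
  have hYdef' : Y =
      {q | ∃ i j : Fin d, IsDiagonal i j ∧ n i ⬝ᵥ q.rep = 0 ∧ n j ⬝ᵥ q.rep = 0} := by
    simp only [hYdef, IsDiagonal, and_assoc]
  have hchoose : 1 < (d - 1).choose 2 :=
    (by decide : 1 < Nat.choose 4 2).trans_le (Nat.choose_le_choose 2 (by omega))
  have hfin : Y.Finite := Set.finite_of_ncard_ne_zero (by omega)
  have hzero : ∀ F : MvPolynomial (Fin 3) ℝ, F.IsHomogeneous (d - 3) →
      (∀ q ∈ Y, eval q.rep F = 0) → eval (crossProduct (n 0) (n (0 + 1))) F = 0 → F = 0 :=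
    fun F => eq_zero_of_eval_vertex_eq_zero hd hne hYdef' hYcard hline
  refine ⟨?_, fun F G hF0 hF hFY hG hGY => ?_, fun F hF hFY => ?_⟩
  · obtain ⟨F, hF0, hF, hFY⟩ := exists_isHomogeneous_eval_eq_zero (d - 3) hfin.toFinset (by
      rw [← Set.ncard_eq_toFinset_card _ hfin, hYcard, show d - 3 + 2 = d - 1 by omega]
      omega)
    exact ⟨F, hF0, hF, fun q hq => hFY q (hfin.mem_toFinset.2 hq)⟩
  · set p := crossProduct (n 0) (n (0 + 1))
    have hFp : eval p F ≠ 0 := fun h => hF0 (hzero F hF hFY h)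
    refine ⟨eval p G / eval p F, sub_eq_zero.1 (hzero _ ?_ (fun q hq => ?_) ?_)⟩
    · rw [smul_eq_C_mul]
      exact hG.sub (hF.C_mul _)
    · rw [map_sub, smul_eval, hFY q hq, hGY q hq, mul_zero, sub_zero]
    · rw [map_sub, smul_eval, div_mul_cancel₀ _ hFp, sub_self]
  · refine eq_zero_of_eval_eq_zero_on_hyperplanes hF n hne
      (ne_smul_of_ne hd hne hYdef' hYcard hline) (by rw [Fintype.card_fin]; omega)
      fun i w hw => ?_
    have hfini : {q ∈ Y | n i ⬝ᵥ q.rep = 0}.Finite := hfin.subset fun q hq => hq.1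
    refine eval_eq_zero_on_line hF (hne i) hfini.toFinset ?_
      (fun q hq => (hfini.mem_toFinset.1 hq).2) (fun q hq => hFY q (hfini.mem_toFinset.1 hq).1) hw
    rw [← Set.ncard_eq_toFinset_card _ hfini, hline]
    omega
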